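/- Let H be a block matrix of the form [[H_D, 0],[H_R, H_D]] where H_D and H_R are square complex matrices of the same size, and suppose H_D is invertible. Then rank(H) = 2·rank(H_D) and det(I + ρ H H^†) ≥ max{det(I + ρ H_D H_D^†)², det(I + ρ H_R H_R^†)} for ρ ≥ 0. -/

import Mathlib

/-!
Replacing `A = √ρ H_D` and `C = √ρ H_R` absorbs `ρ`. Put `X = 1 + A Aᴴ` and `Y = 1 + Aᴴ A`, so
that `det X = det Y`. Taking the Schur complement of the block `X` in `1 + H Hᴴ` and using
`1 - Aᴴ X⁻¹ A = Y⁻¹` gives `det (1 + H Hᴴ) = det X * det (X + C Y⁻¹ Cᴴ)`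
(`det_one_add_block`). The determinant does not decrease when a positive semidefinite matrix is
added to a positive definite one (`det_le_det_add`). Dropping `C Y⁻¹ Cᴴ` therefore gives the lower
bound `(det X)²`; dropping `A Aᴴ` instead gives
`det Y * det (1 + C Y⁻¹ Cᴴ) = det (Y + Cᴴ C) ≥ det (1 + Cᴴ C) = det (1 + C Cᴴ)`.
The rank claim holds because `det H = (det H_D)²` is a unit.
-/

open Matrix

open scoped ComplexOrder

/-- All eigenvalues of `1 + P` are at least `1`, where `P` is positive semidefinite. -/
lemma one_le_det_one_add {m : Type*} [Fintype m] [DecidableEq m] {P : Matrix m m ℂ}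
    (hP : P.PosSemidef) : 1 ≤ (1 + P).det := by
  have h1 : (1 + P).IsHermitian := isHermitian_one.add hP.1
  rw [h1.det_eq_prod_eigenvalues]
  have key : ∀ i, 1 ≤ h1.eigenvalues i := by
    intro i
    have h2 := h1.mulVec_eigenvectorBasis i
    have hv : star (⇑(h1.eigenvectorBasis i)) ⬝ᵥ (⇑(h1.eigenvectorBasis i)) = (1 : ℂ) := by
      have := h1.eigenvectorBasis.orthonormal.1 i
      have h3 := inner_self_eq_norm_sq_to_K (𝕜 := ℂ) (h1.eigenvectorBasis i)
      rw [this, EuclideanSpace.inner_eq_star_dotProduct, dotProduct_comm] at h3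
      simpa using h3
    have h4 := hP.dotProduct_mulVec_nonneg (⇑(h1.eigenvectorBasis i))
    rw [add_mulVec, one_mulVec] at h2
    rw [← eq_sub_iff_add_eq'] at h2
    rw [h2, dotProduct_sub, dotProduct_smul, hv] at h4
    have h5 := (Complex.le_def.1 h4).1
    simp at h5
    exact h5
  have : (1 : ℝ) ≤ ∏ i, h1.eigenvalues i := Finset.one_le_prod fun i _ => key i
  rw [← RCLike.ofReal_prod]
  exact Complex.real_le_real.2 this

open scoped MatrixOrder Matrix.Norms.L2Operator in
lemma det_le_det_add {m : Type*} [Fintype m] [DecidableEq m] {M P : Matrix m m ℂ}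
    (hM : M.PosDef) (hP : P.PosSemidef) : M.det ≤ (M + P).det := by
  obtain ⟨B, rfl⟩ := CStarAlgebra.nonneg_iff_eq_star_mul_self.mp hP.nonneg
  rw [star_eq_conjTranspose]
  rw [det_add_mul _ _ hM.det_pos.ne'.isUnit]
  have h : (B * M⁻¹ * Bᴴ).PosSemidef := hM.inv.posSemidef.mul_mul_conjTranspose_same B
  exact le_mul_of_one_le_right hM.det_pos.le (one_le_det_one_add h)

lemma posDef_one_add {m : Type*} [Fintype m] [DecidableEq m] {P : Matrix m m ℂ}
    (hP : P.PosSemidef) : (1 + P).PosDef := PosDef.one.add_posSemidef hP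

/-- The instance `1 - Aᴴ (1 + A Aᴴ)⁻¹ A = (1 + Aᴴ A)⁻¹` of the Woodbury identity. -/
lemma inv_one_add_conjTranspose_mul_self {m : Type*} [Fintype m] [DecidableEq m]
    (A : Matrix m m ℂ) : (1 + Aᴴ * A)⁻¹ = 1 - Aᴴ * (1 + A * Aᴴ)⁻¹ * A := by
  have hX := posDef_one_add (posSemidef_self_mul_conjTranspose A)
  have hinv := nonsing_inv_mul _ hX.det_pos.ne'.isUnit
  refine inv_eq_left_inv ?_
  have h : Aᴴ * ((1 + A * Aᴴ)⁻¹ * (1 + A * Aᴴ)) * A = Aᴴ * A := by rw [hinv, mul_one]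
  calc (1 - Aᴴ * (1 + A * Aᴴ)⁻¹ * A) * (1 + Aᴴ * A)
      = 1 + Aᴴ * A - Aᴴ * ((1 + A * Aᴴ)⁻¹ * (1 + A * Aᴴ)) * A := by noncomm_ring
    _ = 1 := by rw [h]; abel

/-- Schur complement form of `det (1 + H Hᴴ)` for `H = [[A, 0], [C, A]]`. -/
lemma det_one_add_block {m : Type*} [Fintype m] [DecidableEq m] (A C : Matrix m m ℂ) :
    (1 + fromBlocks A 0 C A * (fromBlocks A 0 C A)ᴴ).det =
      (1 + A * Aᴴ).det * (1 + A * Aᴴ + C * (1 + Aᴴ * A)⁻¹ * Cᴴ).det := by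
  have hX := posDef_one_add (posSemidef_self_mul_conjTranspose A)
  have : Invertible (1 + A * Aᴴ) := invertibleOfIsUnitDet _ hX.det_pos.ne'.isUnit
  rw [fromBlocks_conjTranspose, fromBlocks_multiply, ← fromBlocks_one, fromBlocks_add]
  simp only [conjTranspose_zero, zero_mul, mul_zero, add_zero, zero_add]
  rw [det_fromBlocks₁₁, invOf_eq_nonsing_inv, inv_one_add_conjTranspose_mul_self]
  congr 2
  noncomm_ring

lemma sq_det_le {m : Type*} [Fintype m] [DecidableEq m] (A C : Matrix m m ℂ) :
    (1 + A * Aᴴ).det ^ 2 ≤ (1 + fromBlocks A 0 C A * (fromBlocks A 0 C A)ᴴ).det := by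
  have hX := posDef_one_add (posSemidef_self_mul_conjTranspose A)
  have hY := posDef_one_add (posSemidef_conjTranspose_mul_self A)
  rw [det_one_add_block, sq]
  exact mul_le_mul_of_nonneg_left
    (det_le_det_add hX (hY.inv.posSemidef.mul_mul_conjTranspose_same C)) hX.det_pos.le

lemma det_le_block {m : Type*} [Fintype m] [DecidableEq m] (A C : Matrix m m ℂ) :
    (1 + C * Cᴴ).det ≤ (1 + fromBlocks A 0 C A * (fromBlocks A 0 C A)ᴴ).det := by
  have hX := posDef_one_add (posSemidef_self_mul_conjTranspose A)
  have hY := posDef_one_add (posSemidef_conjTranspose_mul_self A)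
  have hS := hY.inv.posSemidef.mul_mul_conjTranspose_same C
  rw [det_one_add_block]
  calc (1 + C * Cᴴ).det = (1 + Cᴴ * C).det := det_one_add_mul_comm _ _
    _ ≤ (1 + Cᴴ * C + Aᴴ * A).det :=
        det_le_det_add (posDef_one_add (posSemidef_conjTranspose_mul_self C))
          (posSemidef_conjTranspose_mul_self A)
    _ = (1 + Aᴴ * A + Cᴴ * C).det := by rw [add_right_comm]
    _ = (1 + A * Aᴴ).det * (1 + C * (1 + Aᴴ * A)⁻¹ * Cᴴ).det := by
        rw [det_add_mul _ _ hY.det_pos.ne'.isUnit, det_one_add_mul_comm Aᴴ A]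
    _ ≤ (1 + A * Aᴴ).det * (1 + C * (1 + Aᴴ * A)⁻¹ * Cᴴ + A * Aᴴ).det :=
        mul_le_mul_of_nonneg_left
          (det_le_det_add (posDef_one_add hS) (posSemidef_self_mul_conjTranspose A))
          hX.det_pos.le
    _ = _ := by rw [add_right_comm]

lemma smul_mul_conjTranspose_eq {m : Type*} [Fintype m] (M : Matrix m m ℂ) {ρ : ℝ} (hρ : 0 ≤ ρ) :
    ρ • (M * Mᴴ) = (√ρ • M) * (√ρ • M)ᴴ := by
  rw [conjTranspose_smul, smul_mul_smul_comm, star_trivial, Real.mul_self_sqrt hρ]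

/-- For the block matrix `H = [[H_D, 0], [H_R, H_D]]` with `H_D` invertible,
`rank(H) = 2 rank(H_D)` and
`det(I + ρ H H†) ≥ max{det(I + ρ H_D H_D†)², det(I + ρ H_R H_R†)}` for `ρ ≥ 0`. -/
theorem stmt_18 (n : ℕ) (HD HR : Matrix (Fin n) (Fin n) ℂ) (hD : IsUnit HD.det)
    (H : Matrix (Fin n ⊕ Fin n) (Fin n ⊕ Fin n) ℂ)
    (hH : H = Matrix.fromBlocks HD 0 HR HD) (ρ : ℝ) (hρ : 0 ≤ ρ) :
    H.rank = 2 * HD.rank ∧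
      max (((1 + ρ • (HD * HDᴴ)).det).re ^ 2) (((1 + ρ • (HR * HRᴴ)).det).re) ≤
        ((1 + ρ • (H * Hᴴ)).det).re := by
  subst hH
  constructor
  · have hU : IsUnit (fromBlocks HD 0 HR HD).det := by
      rw [det_fromBlocks_zero₁₂]
      exact hD.mul hD
    rw [rank_of_isUnit _ ((isUnit_iff_isUnit_det _).2 hU),
      rank_of_isUnit _ ((isUnit_iff_isUnit_det _).2 hD)]
    simp [two_mul]
  · simp only [smul_mul_conjTranspose_eq _ hρ, fromBlocks_smul, smul_zero]
    refine max_le ?_ (Complex.le_def.1 (det_le_block _ _)).1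
    have h := (Complex.le_def.1 (sq_det_le (√ρ • HD) (√ρ • HR))).1
    -- the determinant is real, so the real part of its square is the square of its real part
    have him := (Complex.le_def.1
      (posDef_one_add (posSemidef_self_mul_conjTranspose (√ρ • HD))).det_pos.le).2
    rw [Complex.zero_im] at him
    rwa [sq, Complex.mul_re, ← him, mul_zero, sub_zero, ← sq] at h
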